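/- Define γ : ℝ → ℓ² by listing, for j = 0, 1, 2, …, the pair of coordinates (√2/(2j+1)) cos((2j+1)θ) and (√2/(2j+1)) sin((2j+1)θ), i.e. γ(θ) = √2 (cos θ, sin θ, (1/3)cos 3θ, (1/3)sin 3θ, (1/5)cos 5θ, (1/5)sin 5θ, …). Then γ(θ) belongs to ℓ² for every θ, and ‖γ(θ)‖_{ℓ²}² = 2 Σ_{k odd} 1/k² = π²/4 for all θ ∈ ℝ; that is, the MDS embedding of the geodesic circle lies on the sphere of radius π/2 in ℓ². -/

import Mathlib

open Real

/-- The coordinates of the MDS embedding `γ` of the geodesic circle into `ℓ²`: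
for `j = 0, 1, 2, …`, coordinate `2j` is `(√2/(2j+1)) cos((2j+1)θ)` and
coordinate `2j+1` is `(√2/(2j+1)) sin((2j+1)θ)`. -/
noncomputable def mdsCircleCoord (θ : ℝ) (i : ℕ) : ℝ :=
  if i % 2 = 0 then Real.sqrt 2 / ((i : ℝ) + 1) * Real.cos (((i : ℝ) + 1) * θ)
  else Real.sqrt 2 / (i : ℝ) * Real.sin ((i : ℝ) * θ)

/-!
The coordinates `2j` and `2j + 1` of `γ(θ)` are `√2/(2j+1)` times a cosine and a sine of the same
angle, so together they contribute `2/(2j+1)²` to the squared norm, independently of `θ`. The sum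
`∑ 1/(2j+1)² = π²/8` is what remains of `ζ(2) = π²/6` after its even terms `ζ(2)/4` are removed.
-/

theorem hasSum_of_hasSum_even_add_odd_of_nonneg {f : ℕ → ℝ} {a : ℝ} (hf : ∀ n, 0 ≤ f n)
    (h : HasSum (fun j ↦ f (2 * j) + f (2 * j + 1)) a) : HasSum f a := by
  have even_summable : Summable fun j ↦ f (2 * j) :=
    h.summable.of_nonneg_of_le (fun _ ↦ hf _) fun _ ↦ le_add_of_nonneg_right (hf _)
  have odd_summable : Summable fun j ↦ f (2 * j + 1) :=
    h.summable.of_nonneg_of_le (fun _ ↦ hf _) fun _ ↦ le_add_of_nonneg_left (hf _)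
  rw [h.unique (even_summable.hasSum.add odd_summable.hasSum)]
  exact even_summable.hasSum.even_add_odd odd_summable.hasSum

theorem hasSum_odd_of_hasSum_of_hasSum_even {E : Type*} [AddCommGroup E] [UniformSpace E]
    [IsUniformAddGroup E] [CompleteSpace E] [T2Space E] {f : ℕ → E} {a b : E} (h : HasSum f a)
    (heven : HasSum (fun j ↦ f (2 * j)) b) : HasSum (fun j ↦ f (2 * j + 1)) (a - b) := by
  have odd_summable : Summable fun j ↦ f (2 * j + 1) :=
    h.summable.comp_injective fun i j hij ↦ by lia
  rw [h.unique (heven.even_add_odd odd_summable.hasSum), add_sub_cancel_left]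
  exact odd_summable.hasSum

theorem hasSum_one_div_odd_pow {k : ℕ} {a : ℝ} (h : HasSum (fun n : ℕ ↦ 1 / (n : ℝ) ^ k) a) :
    HasSum (fun j : ℕ ↦ 1 / (2 * (j : ℝ) + 1) ^ k) (a - a / 2 ^ k) := by
  have even_hasSum : HasSum (fun j : ℕ ↦ 1 / ((2 * j : ℕ) : ℝ) ^ k) (a / 2 ^ k) := by
    simpa [mul_pow, div_eq_mul_inv, mul_comm] using h.div_const (2 ^ k)
  simpa using hasSum_odd_of_hasSum_of_hasSum_even h even_hasSum

theorem hasSum_one_div_odd_sq :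
    HasSum (fun j : ℕ ↦ 1 / (2 * (j : ℝ) + 1) ^ 2) (π ^ 2 / 8) := by
  convert! hasSum_one_div_odd_pow hasSum_zeta_two using 1
  ring

theorem mdsCircleCoord_two_mul (θ : ℝ) (j : ℕ) :
    mdsCircleCoord θ (2 * j) = √2 / (2 * j + 1) * cos ((2 * j + 1) * θ) := by
  simp [mdsCircleCoord]

theorem mdsCircleCoord_two_mul_add_one (θ : ℝ) (j : ℕ) :
    mdsCircleCoord θ (2 * j + 1) = √2 / (2 * j + 1) * sin ((2 * j + 1) * θ) := by
  simp [mdsCircleCoord, Nat.add_mod]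

theorem mdsCircleCoord_sq_add_sq (θ : ℝ) (j : ℕ) :
    mdsCircleCoord θ (2 * j) ^ 2 + mdsCircleCoord θ (2 * j + 1) ^ 2 =
      2 * (1 / (2 * (j : ℝ) + 1) ^ 2) := by
  rw [mdsCircleCoord_two_mul, mdsCircleCoord_two_mul_add_one, mul_pow, mul_pow, ← mul_add,
    cos_sq_add_sin_sq, div_pow, sq_sqrt zero_le_two, mul_one, mul_one_div]

theorem hasSum_mdsCircleCoord_sq (θ : ℝ) :
    HasSum (fun i ↦ mdsCircleCoord θ i ^ 2) (2 * ∑' j : ℕ, 1 / (2 * (j : ℝ) + 1) ^ 2) := by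
  refine hasSum_of_hasSum_even_add_odd_of_nonneg (fun _ ↦ sq_nonneg _) ?_
  simp only [mdsCircleCoord_sq_add_sq]
  exact hasSum_one_div_odd_sq.summable.hasSum.mul_left 2

/-- **Proposition.**  The MDS embedding
`γ(θ) = √2 (cos θ, sin θ, (1/3)cos 3θ, (1/3)sin 3θ, …)` of the geodesic circle
lands in `ℓ²`, and `‖γ(θ)‖² = 2 ∑_{k odd} 1/k² = π²/4` for every `θ`; that is,
the embedding lies on the sphere of radius `π/2` in `ℓ²`. -/
theorem mds_circle_embedding_on_sphere :
    ∀ θ : ℝ, Memℓp (mdsCircleCoord θ) 2 ∧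
      (∑' i : ℕ, (mdsCircleCoord θ i)^2 = 2 * ∑' j : ℕ, 1 / ((2 * (j : ℝ) + 1))^2) ∧
      (∑' i : ℕ, (mdsCircleCoord θ i)^2 = π^2 / 4) := by
  intro θ
  have norm_sq := hasSum_mdsCircleCoord_sq θ
  refine ⟨memℓp_gen (by simpa using norm_sq.summable), norm_sq.tsum_eq, ?_⟩
  rw [norm_sq.tsum_eq, hasSum_one_div_odd_sq.tsum_eq]
  ring
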